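/- arXiv:2310.08015 — 4 statements merged into one kernel-verified Lean document; each statement's English description precedes it below -/
import Mathlib

section
/- Let P0 and P1 be probability measures on a measurable space X, both absolutely continuous with respect to μ = P0 + P1 with densities p0 and p1. Define the soft log-likelihood-ratio acceptance probability g : X → [0,1] by g(o) = √(p0(o)) / (√(p0(o)) + √(p1(o))) when p0(o) + p1(o) > 0 (and g(o) = 0 otherwise). Then the advantage of the soft LLR test with a single sample equals the squared Hellinger distance: ∫ g dP0 − ∫ g dP1 = H²(P0, P1). -/
open MeasureTheory

/-- Integrals against a measure with a real density, as weighted integrals. -/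
lemma integral_of_density {X : Type*} [MeasurableSpace X] (μ P : Measure X)
    (p : X → ℝ) (hpm : Measurable p) (hp : ∀ x, 0 ≤ p x)
    (hP : P = μ.withDensity (fun x => ENNReal.ofReal (p x))) (f : X → ℝ) :
    ∫ x, f x ∂P = ∫ x, p x * f x ∂μ := by
  rw [hP, integral_withDensity_eq_integral_toReal_smul hpm.ennreal_ofReal
    (Filter.Eventually.of_forall fun x => ENNReal.ofReal_lt_top)]
  refine integral_congr_ae (Filter.Eventually.of_forall fun x => ?_)
  simp [ENNReal.toReal_ofReal (hp x)]

/-- A density of a finite measure is integrable. -/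
lemma integrable_density {X : Type*} [MeasurableSpace X] (μ P : Measure X) [IsFiniteMeasure P]
    (p : X → ℝ) (hpm : Measurable p) (hp : ∀ x, 0 ≤ p x)
    (hP : P = μ.withDensity (fun x => ENNReal.ofReal (p x))) : Integrable p μ := by
  refine ⟨hpm.aestronglyMeasurable, ?_⟩
  rw [hasFiniteIntegral_iff_ofReal (Filter.Eventually.of_forall hp)]
  have h : P Set.univ = ∫⁻ x, ENNReal.ofReal (p x) ∂μ := by
    conv_lhs => rw [hP]
    simp
  rw [← h]
  exact measure_lt_top P _

/-- The squared Hellinger advantage identity for the soft log-likelihood-ratio test. -/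
theorem soft_llr_advantage_eq_sq_hellinger
    {X : Type*} [MeasurableSpace X]
    (P0 P1 : Measure X) [IsProbabilityMeasure P0] [IsProbabilityMeasure P1]
    (p0 p1 : X → ℝ) (hp0m : Measurable p0) (hp1m : Measurable p1)
    (hp0 : ∀ x, 0 ≤ p0 x) (hp1 : ∀ x, 0 ≤ p1 x)
    (hP0 : P0 = (P0 + P1).withDensity (fun x => ENNReal.ofReal (p0 x)))
    (hP1 : P1 = (P0 + P1).withDensity (fun x => ENNReal.ofReal (p1 x)))
    (g : X → ℝ)
    (hg : ∀ o, g o =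
      if 0 < p0 o + p1 o then Real.sqrt (p0 o) / (Real.sqrt (p0 o) + Real.sqrt (p1 o)) else 0) :
    ∫ o, g o ∂P0 - ∫ o, g o ∂P1
      = 1 - ∫ x, Real.sqrt (p0 x * p1 x) ∂(P0 + P1) := by
  have key0 := integral_of_density (P0 + P1) P0 p0 hp0m hp0 hP0
  have key1 := integral_of_density (P0 + P1) P1 p1 hp1m hp1 hP1
  have i0 := integrable_density (P0 + P1) P0 p0 hp0m hp0 hP0
  have i1 := integrable_density (P0 + P1) P1 p1 hp1m hp1 hP1
  have hone : ∫ x, p0 x ∂(P0 + P1) = 1 := by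
    have h := key0 (fun _ => 1)
    simpa using h.symm
  have hgm : Measurable g := by
    rw [funext hg]
    exact Measurable.ite (measurableSet_lt measurable_const (hp0m.add hp1m))
      (hp0m.sqrt.div (hp0m.sqrt.add hp1m.sqrt)) measurable_const
  have hgb : ∀ x, ‖g x‖ ≤ 1 := by
    intro x
    have h0 := Real.sqrt_nonneg (p0 x)
    have h1 := Real.sqrt_nonneg (p1 x)
    rw [hg x]
    split_ifs
    · rw [Real.norm_of_nonneg (by positivity)]
      exact div_le_one_of_le₀ (by linarith) (by positivity)
    · simp
  have j0 : Integrable (fun x => p0 x * g x) (P0 + P1) :=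
    i0.mul_bdd (c := 1) hgm.aestronglyMeasurable (Filter.Eventually.of_forall hgb)
  have j1 : Integrable (fun x => p1 x * g x) (P0 + P1) :=
    i1.mul_bdd (c := 1) hgm.aestronglyMeasurable (Filter.Eventually.of_forall hgb)
  have pt : ∀ x, Real.sqrt (p0 x * p1 x) = p0 x - (p0 x * g x - p1 x * g x) := by
    intro x
    have h0 := Real.sqrt_nonneg (p0 x)
    have h1 := Real.sqrt_nonneg (p1 x)
    have e0 := Real.sq_sqrt (hp0 x)
    have e1 := Real.sq_sqrt (hp1 x)
    rw [hg x, Real.sqrt_mul (hp0 x)]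
    split_ifs with h
    · have hs : 0 < Real.sqrt (p0 x) + Real.sqrt (p1 x) := by
        by_contra hn
        have a0 : Real.sqrt (p0 x) = 0 := by linarith
        have a1 : Real.sqrt (p1 x) = 0 := by linarith
        rw [a0] at e0
        rw [a1] at e1
        linarith
      generalize Real.sqrt (p0 x) = a at *
      generalize Real.sqrt (p1 x) = b at *
      rw [← e0, ← e1]
      field_simp
      ring
    · have z0 : p0 x = 0 := by linarith [hp0 x, hp1 x]
      simp [z0]
  have j01 : Integrable (fun x => p0 x * g x - p1 x * g x) (P0 + P1) := j0.sub j1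
  rw [integral_congr_ae (Filter.Eventually.of_forall pt), integral_sub i0 j01,
    integral_sub j0 j1, hone, key0 g, key1 g]
  ring
end

section
/- For any two probability measures P0 and P1 on a measurable space X, there exists a measurable function A : X → [0,1] such that ∫ A dP0 − ∫ A dP1 = H²(P0, P1). In particular, the supremum over all measurable A : X → [0,1] of ∫ A dP0 − ∫ A dP1 is at least H²(P0, P1); that is, a membership-inference adversary whose single observation is distributed according to P0 (sample absent) or P1 (sample present) and who uses the soft log-likelihood-ratio test achieves membership-inference advantage at least H²(P0, P1). -/
open MeasureTheory

/-- The squared Hellinger distance between two measures, computed with respect to the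
dominating measure `P + Q`. -/
noncomputable def sqHellinger {X : Type*} [MeasurableSpace X] (P Q : Measure X) : ℝ :=
  1 - ∫ x, Real.sqrt ((P.rnDeriv (P + Q) x).toReal * (Q.rnDeriv (P + Q) x).toReal) ∂(P + Q)

/-- There is a `[0,1]`-valued (soft LLR) test whose single-sample advantage equals the
squared Hellinger distance; hence the supremum of all advantages is at least `H²(P0,P1)`. -/
theorem exists_test_advantage_eq_sq_hellinger
    {X : Type*} [MeasurableSpace X]
    (P0 P1 : Measure X) [IsProbabilityMeasure P0] [IsProbabilityMeasure P1] :
    (∃ A : X → ℝ, Measurable A ∧ (∀ x, A x ∈ Set.Icc (0 : ℝ) 1) ∧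
        ∫ x, A x ∂P0 - ∫ x, A x ∂P1 = sqHellinger P0 P1) ∧
      sqHellinger P0 P1 ≤
        sSup {r : ℝ | ∃ A : X → ℝ, Measurable A ∧ (∀ x, A x ∈ Set.Icc (0 : ℝ) 1) ∧
          r = ∫ x, A x ∂P0 - ∫ x, A x ∂P1} := by
  have ac0 : P0 ≪ P0 + P1 := Measure.AbsolutelyContinuous.rfl.add_right P1
  have ac1 : P1 ≪ P0 + P1 := by
    rw [add_comm]
    exact Measure.AbsolutelyContinuous.rfl.add_right P0
  have key : ∃ A : X → ℝ, Measurable A ∧ (∀ x, A x ∈ Set.Icc (0 : ℝ) 1) ∧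
        ∫ x, A x ∂P0 - ∫ x, A x ∂P1 = sqHellinger P0 P1 := by
    let p : X → ℝ := fun x => (P0.rnDeriv (P0 + P1) x).toReal
    let q : X → ℝ := fun x => (P1.rnDeriv (P0 + P1) x).toReal
    have hp : Measurable p := (Measure.measurable_rnDeriv _ _).ennreal_toReal
    have hq : Measurable q := (Measure.measurable_rnDeriv _ _).ennreal_toReal
    have hp0 : ∀ x, 0 ≤ p x := fun x => ENNReal.toReal_nonneg
    have hq0 : ∀ x, 0 ≤ q x := fun x => ENNReal.toReal_nonneg
    let A : X → ℝ := fun x => √(p x) / (√(p x) + √(q x))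
    have hA : Measurable A := hp.sqrt.div (hp.sqrt.add hq.sqrt)
    have hA01 : ∀ x, A x ∈ Set.Icc (0 : ℝ) 1 := fun x =>
      ⟨by positivity, div_le_one_of_le₀ (by linarith [Real.sqrt_nonneg (q x)]) (by positivity)⟩
    refine ⟨A, hA, hA01, ?_⟩
    have hint : ∀ (P : Measure X) [IsProbabilityMeasure P], Integrable A P := fun P _ =>
      Integrable.of_bound hA.aestronglyMeasurable 1 (Filter.Eventually.of_forall fun x => by
        rw [Real.norm_eq_abs, abs_of_nonneg (hA01 x).1]; exact (hA01 x).2)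
    have i0 : Integrable (fun x => p x * A x) (P0 + P1) :=
      (integrable_rnDeriv_smul_iff ac0).2 (hint P0)
    have i1 : Integrable (fun x => q x * A x) (P0 + P1) :=
      (integrable_rnDeriv_smul_iff ac1).2 (hint P1)
    have ip : Integrable p (P0 + P1) := Measure.integrable_toReal_rnDeriv
    have e0 : ∫ x, p x * A x ∂(P0 + P1) = ∫ x, A x ∂P0 := integral_rnDeriv_smul ac0
    have e1 : ∫ x, q x * A x ∂(P0 + P1) = ∫ x, A x ∂P1 := integral_rnDeriv_smul ac1
    have ep : ∫ x, p x ∂(P0 + P1) = 1 := by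
      have := Measure.integral_toReal_rnDeriv ac0
      simpa [p] using this
    have hpt : ∀ x, √(p x * q x) = p x - (p x * A x - q x * A x) := by
      intro x
      rw [Real.sqrt_mul (hp0 x)]
      have h1 := Real.sq_sqrt (hp0 x)
      have h2 := Real.sq_sqrt (hq0 x)
      have h3 := Real.sqrt_nonneg (p x)
      have h4 := Real.sqrt_nonneg (q x)
      simp only [A]
      generalize √(p x) = a at *
      generalize √(q x) = b at *
      rw [← h1, ← h2]
      by_cases h : a + b = 0
      · have ha : a = 0 := by linarith
        simp [ha]
      · field_simp
        ring
    have : sqHellinger P0 P1 = 1 - ∫ x, √(p x * q x) ∂(P0 + P1) := rfl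
    rw [this, ← e0, ← e1]
    simp_rw [hpt]
    have i01 : Integrable (fun x => p x * A x - q x * A x) (P0 + P1) := i0.sub i1
    rw [integral_sub ip i01, integral_sub i0 i1, ep]
    ring
  refine ⟨key, ?_⟩
  obtain ⟨A, hA, hA01, hE⟩ := key
  refine le_csSup ⟨1, ?_⟩ ⟨A, hA, hA01, hE.symm⟩
  rintro r ⟨B, hB, hB01, rfl⟩
  have hi : Integrable B P0 :=
    Integrable.of_bound hB.aestronglyMeasurable 1 (Filter.Eventually.of_forall fun x => by
      rw [Real.norm_eq_abs, abs_of_nonneg (hB01 x).1]; exact (hB01 x).2)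
  have h1 : ∫ x, B x ∂P0 ≤ 1 := by
    have := integral_mono hi (integrable_const (1 : ℝ)) (fun x => (hB01 x).2)
    simpa using this
  have h2 : 0 ≤ ∫ x, B x ∂P1 := integral_nonneg fun x => (hB01 x).1
  linarith
end

section
/- For any α ∈ (0,1) and any probability measures P0 ≠ P1 on a measurable space X with h = H²(P0, P1) ∈ (0,1), the optimal sample complexity M_α — the least n such that some measurable test T : X^n → [0,1] achieves advantage ∫ T dP0^⊗n − ∫ T dP1^⊗n ≥ α — satisfies (α²/2) · (1/h) ≤ M_α ≤ ⌈ln(1/(1−α)) / h⌉. In other words, the optimal sample complexity of distinguishing P0 from P1 is Θ(1 / H²(P0, P1)) with constants depending only on α. -/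
open MeasureTheory

lemma aux_pi_density {X : Type*} [MeasurableSpace X] (P μ : Measure X) [IsProbabilityMeasure P]
    [IsFiniteMeasure μ] (hP : P ≪ μ) (n : ℕ) :
    Measure.pi (fun _ : Fin n => P) = (Measure.pi fun _ : Fin n => μ).withDensity
      (fun x => ENNReal.ofReal (∏ i, (P.rnDeriv μ (x i)).toReal)) := by
  apply Measure.pi_eq
  intro s hs
  have hint : ∀ i : Fin n, Integrable (fun x => (P.rnDeriv μ x).toReal) (μ.restrict (s i)) :=
    fun i => Measure.integrable_toReal_rnDeriv.restrict
  rw [withDensity_apply _ (MeasurableSet.univ_pi hs), Measure.restrict_pi_pi,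
    ← ofReal_integral_eq_lintegral_ofReal]
  · rw [integral_fintype_prod_eq_prod (fun _ x => (P.rnDeriv μ x).toReal),
      ENNReal.ofReal_prod_of_nonneg]
    · refine Finset.prod_congr rfl fun i _ => ?_
      rw [Measure.setIntegral_toReal_rnDeriv hP]
      simp [Measure.real]
    · intro i _
      exact integral_nonneg fun _ => ENNReal.toReal_nonneg
  · exact Integrable.fintype_prod (f := fun _ x => (P.rnDeriv μ x).toReal) hint
  · exact Filter.Eventually.of_forall fun x => Finset.prod_nonneg fun _ _ => ENNReal.toReal_nonneg

lemma aux_pi_integral {X : Type*} [MeasurableSpace X] (P μ : Measure X) [IsProbabilityMeasure P]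
    [IsFiniteMeasure μ] (hP : P ≪ μ) (n : ℕ) (T : (Fin n → X) → ℝ) :
    ∫ x, T x ∂(Measure.pi fun _ : Fin n => P) =
      ∫ x, (∏ i, (P.rnDeriv μ (x i)).toReal) * T x ∂(Measure.pi fun _ : Fin n => μ) := by
  rw [aux_pi_density P μ hP, integral_withDensity_eq_integral_toReal_smul]
  · refine integral_congr_ae (Filter.Eventually.of_forall fun x => ?_)
    simp only [smul_eq_mul]
    rw [ENNReal.toReal_ofReal (Finset.prod_nonneg fun _ _ => ENNReal.toReal_nonneg)]
  · have := Measure.measurable_rnDeriv P μ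
    fun_prop
  · exact Filter.Eventually.of_forall fun x => ENNReal.ofReal_lt_top

section
variable {Y : Type*} [MeasurableSpace Y] {ν : Measure Y} {F G T : Y → ℝ}

lemma aux_sqrt_integrable (hFm : Measurable F) (hGm : Measurable G)
    (hF : ∀ x, 0 ≤ F x) (hG : ∀ x, 0 ≤ G x) (hFi : Integrable F ν) (hGi : Integrable G ν) :
    Integrable (fun x => Real.sqrt (F x * G x)) ν := by
  refine (hFi.add hGi).mono' (by fun_prop) (Filter.Eventually.of_forall fun x => ?_)
  rw [Real.norm_eq_abs, abs_of_nonneg (Real.sqrt_nonneg _)]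
  apply Real.sqrt_le_iff.2
  have := hF x; have := hG x
  simp only [Pi.add_apply]
  constructor
  · positivity
  · nlinarith [mul_nonneg (hF x) (hG x), sq_nonneg (F x), sq_nonneg (G x)]

lemma aux_test_integrable (hFi : Integrable F ν)
    (hTm : Measurable T) (hT : ∀ x, T x ∈ Set.Icc (0:ℝ) 1) :
    Integrable (fun x => F x * T x) ν := by
  refine hFi.mul_bdd (c := 1) hTm.aestronglyMeasurable (Filter.Eventually.of_forall fun x => ?_)
  rw [Real.norm_eq_abs, abs_of_nonneg (hT x).1]
  exact (hT x).2

lemma aux_upper (hFm : Measurable F) (hGm : Measurable G)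
    (hF : ∀ x, 0 ≤ F x) (hG : ∀ x, 0 ≤ G x) (hFi : Integrable F ν) (hGi : Integrable G ν)
    (hF1 : ∫ x, F x ∂ν = 1) :
    ∃ T : Y → ℝ, Measurable T ∧ (∀ x, T x ∈ Set.Icc (0:ℝ) 1) ∧
      1 - ∫ x, Real.sqrt (F x * G x) ∂ν ≤ (∫ x, F x * T x ∂ν) - ∫ x, G x * T x ∂ν := by
  classical
  let T : Y → ℝ := fun x => if G x ≤ F x then 1 else 0
  have hTm : Measurable T := Measurable.ite (measurableSet_le hGm hFm) measurable_const measurable_const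
  have hT : ∀ x, T x ∈ Set.Icc (0:ℝ) 1 := by
    intro x
    simp only [T]; split_ifs <;> simp
  have hS := aux_sqrt_integrable hFm hGm hF hG hFi hGi
  have hFT := aux_test_integrable hFi hTm hT
  have hGT := aux_test_integrable hGi hTm hT
  refine ⟨T, hTm, hT, ?_⟩
  rw [← hF1, ← integral_sub hFi hS, ← integral_sub hFT hGT]
  refine integral_mono (hFi.sub hS) (hFT.sub hGT) fun x => ?_
  have h0 := hF x
  have h1 := hG x
  simp only [T]
  split_ifs with h
  · have : G x ≤ Real.sqrt (F x * G x) := Real.le_sqrt_of_sq_le (by nlinarith)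
    linarith
  · have : F x ≤ Real.sqrt (F x * G x) := Real.le_sqrt_of_sq_le (by nlinarith)
    linarith

lemma aux_lower (hFm : Measurable F) (hGm : Measurable G)
    (hF : ∀ x, 0 ≤ F x) (hG : ∀ x, 0 ≤ G x) (hFi : Integrable F ν) (hGi : Integrable G ν)
    (hF1 : ∫ x, F x ∂ν = 1) (hG1 : ∫ x, G x ∂ν = 1)
    (hTm : Measurable T) (hT : ∀ x, T x ∈ Set.Icc (0:ℝ) 1) {α : ℝ} (hα : 0 < α)
    (h : α ≤ (∫ x, F x * T x ∂ν) - ∫ x, G x * T x ∂ν) :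
    α ^ 2 ≤ 1 - (∫ x, Real.sqrt (F x * G x) ∂ν) ^ 2 := by
  have hS := aux_sqrt_integrable hFm hGm hF hG hFi hGi
  have hFT := aux_test_integrable hFi hTm hT
  have hGT := aux_test_integrable hGi hTm hT
  set B := ∫ x, Real.sqrt (F x * G x) ∂ν with hB
  have hB0 : 0 ≤ B := integral_nonneg fun _ => Real.sqrt_nonneg _
  obtain ⟨t, ht⟩ : ∃ t : ℝ, t = (1 + B) / α := ⟨_, rfl⟩
  have ht0 : 0 < t := by rw [ht]; positivity
  have key : (∫ x, F x * T x ∂ν) - ∫ x, G x * T x ∂ν ≤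
      ∫ x, (F x * (1/2 + t/4 + 1/(4*t)) + G x * (-1/2 + t/4 + 1/(4*t)))
        + Real.sqrt (F x * G x) * (1/(2*t) - t/2) ∂ν := by
    rw [← integral_sub hFT hGT]
    refine integral_mono (hFT.sub hGT)
      (((hFi.mul_const _).add (hGi.mul_const _)).add (hS.mul_const _)) fun x => ?_
    simp only
    rw [Real.sqrt_mul (hF x)]
    obtain ⟨a, ha⟩ : ∃ a, a = Real.sqrt (F x) := ⟨_, rfl⟩
    obtain ⟨b, hb⟩ : ∃ b, b = Real.sqrt (G x) := ⟨_, rfl⟩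
    have haa : F x = a ^ 2 := by rw [ha, Real.sq_sqrt (hF x)]
    have hbb : G x = b ^ 2 := by rw [hb, Real.sq_sqrt (hG x)]
    rw [← ha, ← hb, haa, hbb]
    obtain ⟨h0, h1⟩ := hT x
    have e : a ^ 2 * (1/2 + t/4 + 1/(4*t)) + b ^ 2 * (-1/2 + t/4 + 1/(4*t))
        + a * b * (1/(2*t) - t/2)
        = (a^2 - b^2)/2 + (t^2 * (a-b)^2 + (a+b)^2)/(4*t) := by
      field_simp; ring
    rw [e]
    have h3 : |a^2-b^2|/2 ≤ (t^2 * (a-b)^2 + (a+b)^2)/(4*t) := by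
      rw [le_div_iff₀ (by positivity)]
      rcases abs_cases (a^2-b^2) with ⟨h, _⟩ | ⟨h, _⟩ <;> rw [h]
      · nlinarith [sq_nonneg (t*(a-b) - (a+b))]
      · nlinarith [sq_nonneg (t*(a-b) + (a+b))]
    have h4 : (a^2-b^2) * (T x - 1/2) ≤ |a^2-b^2|/2 := by
      rcases abs_cases (a^2-b^2) with ⟨h, _⟩ | ⟨h, _⟩ <;> rw [h] <;> nlinarith
    linarith
  have hFG : Integrable (fun x => F x * (1/2 + t/4 + 1/(4*t)) + G x * (-1/2 + t/4 + 1/(4*t))) ν :=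
    (hFi.mul_const _).add (hGi.mul_const _)
  rw [integral_add hFG (hS.mul_const _),
    integral_add (hFi.mul_const _) (hGi.mul_const _), integral_mul_const, integral_mul_const,
    integral_mul_const, hF1, hG1, ← hB] at key
  have h5 := h.trans key
  have e : 1 * (1/2 + t/4 + 1/(4*t)) + 1 * (-1/2 + t/4 + 1/(4*t)) + B * (1/(2*t) - t/2)
      = ((1 - B^2)/α + α)/2 := by
    rw [ht]; field_simp; ring
  rw [e] at h5
  have h6 : α ≤ (1 - B^2)/α := by linarith
  rw [le_div_iff₀ hα] at h6
  nlinarith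
end

/-- For `α ∈ (0,1)` and `P0 ≠ P1` with `h = H²(P0,P1) ∈ (0,1)`, the optimal sample
complexity `M_α` (the least `n` for which some `[0,1]`-valued test on `n` i.i.d. samples
achieves advantage at least `α`) exists and satisfies
`(α²/2)·(1/h) ≤ M_α ≤ ⌈ln(1/(1-α))/h⌉`, i.e. `M_α = Θ(1/H²(P0,P1))`. -/
theorem sample_complexity_theta_inv_sq_hellinger
    {X : Type*} [MeasurableSpace X]
    (P0 P1 : Measure X) [IsProbabilityMeasure P0] [IsProbabilityMeasure P1]
    (hne : P0 ≠ P1) (hh : sqHellinger P0 P1 ∈ Set.Ioo (0 : ℝ) 1)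
    (α : ℝ) (hα : α ∈ Set.Ioo (0 : ℝ) 1) :
    ∃ M : ℕ, IsLeast {n : ℕ | ∃ T : (Fin n → X) → ℝ,
        Measurable T ∧ (∀ x, T x ∈ Set.Icc (0 : ℝ) 1) ∧
        α ≤ (∫ x, T x ∂(Measure.pi fun _ : Fin n => P0))
              - ∫ x, T x ∂(Measure.pi fun _ : Fin n => P1)} M ∧
      (α ^ 2 / 2) * (1 / sqHellinger P0 P1) ≤ (M : ℝ) ∧
      (M : ℝ) ≤ (⌈Real.log (1 / (1 - α)) / sqHellinger P0 P1⌉₊ : ℝ) := by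
  classical
  obtain ⟨hα0, hα1⟩ := hα
  obtain ⟨hh0, hh1⟩ := hh
  have hP : P0 ≪ P0 + P1 := Measure.AbsolutelyContinuous.rfl.add_right _
  have hQ : P1 ≪ P0 + P1 := Measure.absolutelyContinuous_of_le (Measure.le_add_left le_rfl)
  let F : (n : ℕ) → (Fin n → X) → ℝ := fun n x => ∏ i, (P0.rnDeriv (P0 + P1) (x i)).toReal
  let G : (n : ℕ) → (Fin n → X) → ℝ := fun n x => ∏ i, (P1.rnDeriv (P0 + P1) (x i)).toReal
  have m0 := Measure.measurable_rnDeriv P0 (P0 + P1)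
  have m1 := Measure.measurable_rnDeriv P1 (P0 + P1)
  have hFm : ∀ n, Measurable (F n) := fun n => by fun_prop
  have hGm : ∀ n, Measurable (G n) := fun n => by fun_prop
  have hF : ∀ n x, 0 ≤ F n x := fun n x => Finset.prod_nonneg fun _ _ => ENNReal.toReal_nonneg
  have hG : ∀ n x, 0 ≤ G n x := fun n x => Finset.prod_nonneg fun _ _ => ENNReal.toReal_nonneg
  have hFi : ∀ n, Integrable (F n) (Measure.pi fun _ : Fin n => P0 + P1) := fun n =>
    Integrable.fintype_prod (f := fun _ x => (P0.rnDeriv (P0 + P1) x).toReal)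
      fun _ => Measure.integrable_toReal_rnDeriv
  have hGi : ∀ n, Integrable (G n) (Measure.pi fun _ : Fin n => P0 + P1) := fun n =>
    Integrable.fintype_prod (f := fun _ x => (P1.rnDeriv (P0 + P1) x).toReal)
      fun _ => Measure.integrable_toReal_rnDeriv
  have hF1 : ∀ n, ∫ x, F n x ∂(Measure.pi fun _ : Fin n => P0 + P1) = 1 := fun n => by
    have := aux_pi_integral P0 (P0 + P1) hP n (fun _ => 1)
    simpa using this.symm
  have hG1 : ∀ n, ∫ x, G n x ∂(Measure.pi fun _ : Fin n => P0 + P1) = 1 := fun n => by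
    have := aux_pi_integral P1 (P0 + P1) hQ n (fun _ => 1)
    simpa using this.symm
  have hB : ∀ n, ∫ x, Real.sqrt (F n x * G n x) ∂(Measure.pi fun _ : Fin n => P0 + P1)
      = (1 - sqHellinger P0 P1) ^ n := fun n => by
    have h1 : 1 - sqHellinger P0 P1 = ∫ x, Real.sqrt ((P0.rnDeriv (P0 + P1) x).toReal *
      (P1.rnDeriv (P0 + P1) x).toReal) ∂(P0 + P1) := by unfold sqHellinger; ring
    have h2 := integral_fintype_prod_eq_pow (ι := Fin n) (μ := P0 + P1) (fun x =>
      Real.sqrt ((P0.rnDeriv (P0 + P1) x).toReal * (P1.rnDeriv (P0 + P1) x).toReal))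
    rw [h1]
    rw [Fintype.card_fin] at h2
    rw [← h2]
    refine integral_congr_ae (Filter.Eventually.of_forall fun x => ?_)
    simp only [F, G]
    rw [← Finset.prod_mul_distrib, Real.sqrt_prod]
    intro i _
    exact mul_nonneg ENNReal.toReal_nonneg ENNReal.toReal_nonneg
  generalize sqHellinger P0 P1 = h at *
  set S := {n : ℕ | ∃ T : (Fin n → X) → ℝ,
        Measurable T ∧ (∀ x, T x ∈ Set.Icc (0 : ℝ) 1) ∧
        α ≤ (∫ x, T x ∂(Measure.pi fun _ : Fin n => P0))
              - ∫ x, T x ∂(Measure.pi fun _ : Fin n => P1)} with hS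
  have hlow : ∀ n ∈ S, (α ^ 2 / 2) * (1 / h) ≤ (n : ℝ) := by
    rintro n ⟨T, hTm, hT, hadv⟩
    rw [aux_pi_integral P0 (P0 + P1) hP, aux_pi_integral P1 (P0 + P1) hQ] at hadv
    have h1 := aux_lower (hFm n) (hGm n) (hF n) (hG n) (hFi n) (hGi n) (hF1 n) (hG1 n)
      hTm hT hα0 hadv
    rw [hB, ← pow_mul] at h1
    have h2 := one_add_mul_le_pow (a := -h) (by linarith) (n * 2)
    push_cast at h2
    rw [← sub_eq_add_neg] at h2
    rw [mul_one_div, div_le_iff₀ hh0]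
    linarith
  have hup : ⌈Real.log (1 / (1 - α)) / h⌉₊ ∈ S := by
    set n := ⌈Real.log (1 / (1 - α)) / h⌉₊ with hn
    obtain ⟨T, hTm, hT, hadv⟩ := aux_upper (hFm n) (hGm n) (hF n) (hG n) (hFi n) (hGi n) (hF1 n)
    refine ⟨T, hTm, hT, ?_⟩
    rw [aux_pi_integral P0 (P0 + P1) hP, aux_pi_integral P1 (P0 + P1) hQ]
    refine le_trans ?_ hadv
    rw [hB]
    have h1 : Real.log (1 / (1 - α)) ≤ n * h := by
      rw [← div_le_iff₀ hh0]; exact Nat.le_ceil _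
    have h2 : (1 - h) ^ n ≤ Real.exp (-(n * h)) := by
      have : (1 - h) ^ n ≤ (Real.exp (-h)) ^ n :=
        pow_le_pow_left₀ (by linarith) (Real.one_sub_le_exp_neg h) n
      rw [← Real.exp_nat_mul] at this
      simpa using this
    have h3 : Real.exp (-(n * h)) ≤ 1 - α := by
      rw [← Real.le_log_iff_exp_le (by linarith)]
      rw [one_div, Real.log_inv] at h1
      linarith
    linarith
  refine ⟨sInf S, ⟨Nat.sInf_mem ⟨_, hup⟩, fun n hn => Nat.sInf_le hn⟩,
    hlow _ (Nat.sInf_mem ⟨_, hup⟩), ?_⟩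
  exact_mod_cast Nat.sInf_le hup
end

section
/- Let p, q ∈ [0,1] with p ≥ q, where p = P_in(E) and q = P_out(E) are the probabilities that a model predicts label y on input x when trained with and without the sample z = (x,y), so that the memorization score is mem = p − q > 0. For any α ∈ (0,1) and any measurable test T : {0,1}^n → [0,1] distinguishing Bernoulli(q)^⊗n from Bernoulli(p)^⊗n (the n shadow-model indicator observations in the 'out' and 'in' cases) with advantage ∫ T d(Bernoulli(q))^⊗n − ∫ T d(Bernoulli(p))^⊗n ≥ α, it must hold that n ≥ α² / (2 · mem). That is, the number of shadow models needed to achieve a fixed advantage is inversely proportional to the memorization score of the challenge sample. -/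
open MeasureTheory

/-- The Bernoulli measure on `{0,1}` (modelled as `Bool`): mass `p` at `true` and
`1 - p` at `false`. -/
noncomputable def bern (p : ℝ) : Measure Bool :=
  ENNReal.ofReal p • Measure.dirac true + ENNReal.ofReal (1 - p) • Measure.dirac false

noncomputable def bernExp (r : ℝ) : (n : ℕ) → ((Fin n → Bool) → ℝ) → ℝ
  | 0, T => T Fin.elim0
  | n + 1, T => r * bernExp r n (fun x => T (Fin.cons true x))
      + (1 - r) * bernExp r n (fun x => T (Fin.cons false x))

lemma bernExp_eq_sum (r : ℝ) (n : ℕ) (T : (Fin n → Bool) → ℝ) :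
    bernExp r n T = ∑ x, (∏ i, if x i then r else 1 - r) * T x := by
  induction n with
  | zero =>
    simp only [bernExp, Finset.univ_unique, Finset.sum_singleton, Finset.univ_eq_empty,
      Finset.prod_empty, one_mul]
    congr 1
  | succ n ih =>
    rw [← (Fin.consEquiv (fun _ : Fin (n + 1) => Bool)).sum_comp, Fintype.sum_prod_type]
    simp [bernExp, ih, Fin.consEquiv, Fin.prod_univ_succ, Finset.mul_sum, mul_assoc]

lemma bernExp_mem (r : ℝ) (h0 : 0 ≤ r) (h1 : r ≤ 1) (n : ℕ) (T : (Fin n → Bool) → ℝ)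
    (hT : ∀ x, T x ∈ Set.Icc (0 : ℝ) 1) : bernExp r n T ∈ Set.Icc (0 : ℝ) 1 := by
  induction n with
  | zero => exact hT _
  | succ n ih =>
    obtain ⟨a0, a1⟩ := ih (fun x => T (Fin.cons true x)) (fun x => hT _)
    obtain ⟨b0, b1⟩ := ih (fun x => T (Fin.cons false x)) (fun x => hT _)
    simp only [bernExp]
    constructor <;> nlinarith

lemma bernExp_diff (p q : ℝ) (q0 : 0 ≤ q) (p1 : p ≤ 1) (hqp : q ≤ p) (n : ℕ)
    (T : (Fin n → Bool) → ℝ) (hT : ∀ x, T x ∈ Set.Icc (0 : ℝ) 1) :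
    bernExp q n T - bernExp p n T ≤ n * (p - q) := by
  induction n with
  | zero => simp [bernExp]
  | succ n ih =>
    have a := ih (fun x => T (Fin.cons true x)) (fun x => hT _)
    have b := ih (fun x => T (Fin.cons false x)) (fun x => hT _)
    obtain ⟨a0, a1⟩ := bernExp_mem p (q0.trans hqp) p1 n (fun x => T (Fin.cons true x)) (fun x => hT _)
    obtain ⟨b0, b1⟩ := bernExp_mem p (q0.trans hqp) p1 n (fun x => T (Fin.cons false x)) (fun x => hT _)
    simp only [bernExp]
    push_cast
    have h1 := mul_le_mul_of_nonneg_left a q0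
    have h2 := mul_le_mul_of_nonneg_left b (sub_nonneg.2 (hqp.trans p1))
    have h3 := mul_nonneg (sub_nonneg.2 hqp) a0
    have h4 := mul_nonneg (sub_nonneg.2 hqp) (sub_nonneg.2 b1)
    nlinarith

lemma integral_bern (r : ℝ) (h0 : 0 ≤ r) (h1 : r ≤ 1) (n : ℕ) (T : (Fin n → Bool) → ℝ) :
    ∫ x, T x ∂(Measure.pi fun _ : Fin n => bern r) = bernExp r n T := by
  haveI : IsProbabilityMeasure (bern r) := ⟨by
    simp [bern, ← ENNReal.ofReal_add h0 (sub_nonneg.2 h1)]⟩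
  rw [integral_fintype (Integrable.of_finite), bernExp_eq_sum]
  refine Finset.sum_congr rfl fun x _ => ?_
  rw [smul_eq_mul, Measure.real, Measure.pi_singleton, ENNReal.toReal_prod]
  congr 1
  refine Finset.prod_congr rfl fun i _ => ?_
  cases x i <;> simp [bern, h0, h1]

/-- With `p = P_in(E)` and `q = P_out(E)` and memorization score `mem = p - q > 0`, any
test on `n` shadow-model indicator observations that distinguishes `Bernoulli(q)^⊗n`
(the 'out' case) from `Bernoulli(p)^⊗n` (the 'in' case) with advantage at least `α`
requires `n ≥ α² / (2·mem)` shadow models. -/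
theorem shadow_models_ge_inv_mem
    {Θ : Type*} [MeasurableSpace Θ]
    (Pin Pout : Measure Θ) [IsProbabilityMeasure Pin] [IsProbabilityMeasure Pout]
    (E : Set Θ) (hE : MeasurableSet E)
    (p q : ℝ) (hp : p = (Pin E).toReal) (hq : q = (Pout E).toReal)
    (hqp : q ≤ p) (hmem : 0 < p - q)
    (α : ℝ) (hα : α ∈ Set.Ioo (0 : ℝ) 1)
    (n : ℕ)
    (T : (Fin n → Bool) → ℝ) (hTm : Measurable T) (hT01 : ∀ x, T x ∈ Set.Icc (0 : ℝ) 1)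
    (hadv : α ≤ (∫ x, T x ∂(Measure.pi fun _ : Fin n => bern q))
        - ∫ x, T x ∂(Measure.pi fun _ : Fin n => bern p)) :
    α ^ 2 / (2 * (p - q)) ≤ (n : ℝ) := by
  have hq0 : 0 ≤ q := hq ▸ ENNReal.toReal_nonneg
  have hp1 : p ≤ 1 := hp ▸ (measureReal_le_one : Pin.real E ≤ 1)
  rw [integral_bern q hq0 (hqp.trans hp1), integral_bern p (hq0.trans hqp) hp1] at hadv
  have h := hadv.trans (bernExp_diff p q hq0 hp1 hqp n T hT01)
  obtain ⟨h0, h1⟩ := hα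
  rw [div_le_iff₀ (by linarith)]
  nlinarith
end
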